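/- Asymptotics of the GDP-to-DP conversion function (proved within Theorem 3.6). For μ > 0 and ε ≥ 0, define δ_μ(ε) = Φ(−ε/μ + μ/2) − e^ε Φ(−ε/μ − μ/2), where Φ is the standard normal cumulative distribution function. Set c(μ) = √(2 log(1/μ)) and ε(μ) = c(μ)·μ. Then, as μ → 0⁺, δ_μ(ε(μ)) = μ²/(2√(2π) log(1/μ)) · (1 + o(1)); equivalently, lim_{μ→0⁺} δ_μ(ε(μ)) · 2√(2π) log(1/μ) / μ² = 1. -/

import Mathlib

/-!
Put `c = √(2 log(1/μ))` and `a = c - μ/2`. Writing both normal tails as integrals over `(0, ∞)` and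
completing the square (`gdpDelta_eq_integral`) gives

  `δ_μ(cμ) = φ(a) ∫₀^∞ e^{-at} e^{-t²/2} (1 - e^{-μt}) dt`.

As `a → ∞` the integral is concentrated near `t = 0`, where the integrand is about `μ t e^{-at}`, so
the integral is about `μ / a²`. Explicitly, `gdpDelta_bounds` places it between
`(μ / a²) (1 - μ/a - 3/a²)` and `μ / a²`. Since `e^{-c²/2} = μ`,
`φ(a) = (μ / √(2π)) exp(cμ/2 - μ²/8)` (`gaussianPDFReal_eq`). As `μ → 0⁺` one has `c → ∞`,
`cμ → 0` and `c / a → 1`, so after multiplication by `√(2π) c² / μ²` both bounds tend to `1`.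
-/

open Real MeasureTheory ProbabilityTheory Filter Topology

/-- The standard normal cumulative distribution function. -/
noncomputable def stdNormalCDF (x : ℝ) : ℝ :=
  ((gaussianReal 0 1) (Set.Iic x)).toReal

/-- The GDP-to-DP conversion function `δ_μ(ε) = Φ(−ε/μ + μ/2) − e^ε Φ(−ε/μ − μ/2)`. -/
noncomputable def gdpDelta (μ ε : ℝ) : ℝ :=
  stdNormalCDF (-ε / μ + μ / 2) - Real.exp ε * stdNormalCDF (-ε / μ - μ / 2)

lemma integrableOn_pow_mul_exp (n : ℕ) {b : ℝ} (hb : 0 < b) :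
    IntegrableOn (fun t : ℝ => t ^ n * exp (-(b * t))) (Set.Ioi 0) := by
  have h := integrableOn_rpow_mul_exp_neg_mul_rpow (p := 1) (s := n) (b := b)
    (by have := Nat.cast_nonneg (α := ℝ) n; linarith) one_pos hb
  simpa using h

lemma integral_pow_mul_exp (n : ℕ) {b : ℝ} (hb : 0 < b) :
    ∫ t in Set.Ioi (0 : ℝ), t ^ n * exp (-(b * t)) = n.factorial / b ^ (n + 1) := by
  have h := integral_rpow_mul_exp_neg_mul_Ioi (a := (n : ℝ) + 1) (by positivity) hb
  rw [Gamma_nat_eq_factorial] at h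
  have h2 : (1 / b) ^ ((n : ℝ) + 1) = 1 / b ^ (n + 1) := by
    rw [← Nat.cast_succ, rpow_natCast, one_div_pow]
  rw [h2] at h
  simp only [add_sub_cancel_right, rpow_natCast] at h
  rw [h]; ring

lemma exp_neg_le_quadratic {s : ℝ} (hs : 0 ≤ s) : exp (-s) ≤ 1 - s + s ^ 2 / 2 := by
  rw [exp_neg, inv_le_iff_one_le_mul₀ (exp_pos s)]
  have h := quadratic_le_exp_of_nonneg hs
  have h2 : 0 ≤ 1 - s + s ^ 2 / 2 := by nlinarith [sq_nonneg (s - 1)]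
  nlinarith [mul_le_mul_of_nonneg_left h h2, sq_nonneg (s ^ 2)]

/-- The lower tail at `-x` equals the upper tail at `x`, written as an integral over `(0, ∞)`. -/
lemma stdNormalCDF_neg (x : ℝ) :
    stdNormalCDF (-x) = ∫ t in Set.Ioi (0 : ℝ), gaussianPDFReal 0 1 (x + t) := by
  unfold stdNormalCDF
  rw [gaussianReal_apply_eq_integral _ one_ne_zero,
    ENNReal.toReal_ofReal (integral_nonneg fun t => gaussianPDFReal_nonneg _ _ t),
    ← integral_comp_neg_Ioi]
  have h := (measurePreserving_add_left volume x).setIntegral_preimage_emb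
    (MeasurableEquiv.addLeft x).measurableEmbedding (fun t => gaussianPDFReal 0 1 (-t)) (Set.Ioi x)
  rw [← h]
  simp only [gaussianPDFReal, Set.preimage_const_add_Ioi, sub_self]
  congr 1
  ext t
  ring_nf

/-- Both tails in `δ_μ(cμ)` have the common Gaussian weight `φ(c - μ/2 + t)`, since
`e^{cμ} φ(c + μ/2 + t) = e^{-μt} φ(c - μ/2 + t)`. -/
lemma gdpDelta_eq_integral {μ : ℝ} (hμ : 0 < μ) (c : ℝ) :
    gdpDelta μ (c * μ) = gaussianPDFReal 0 1 (c - μ / 2) * ∫ t in Set.Ioi (0 : ℝ),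
      exp (-((c - μ / 2) * t)) * exp (-t ^ 2 / 2) * (1 - exp (-(μ * t))) := by
  have hc : c * μ / μ = c := by field_simp
  have hint (x : ℝ) : Integrable (fun t => gaussianPDFReal 0 1 (x + t))
      (volume.restrict (Set.Ioi 0)) :=
    ((integrable_gaussianPDFReal 0 1).comp_add_left x).integrableOn
  unfold gdpDelta
  rw [neg_div, hc, show -c + μ / 2 = -(c - μ / 2) by ring, show -c - μ / 2 = -(c + μ / 2) by ring,
    stdNormalCDF_neg, stdNormalCDF_neg, ← integral_const_mul, ← integral_const_mul,
    ← integral_sub (hint _) ((hint _).const_mul _)]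
  congr 1
  ext t
  simp only [gaussianPDFReal, NNReal.coe_one, sub_zero, mul_one, mul_sub, mul_assoc,
    mul_left_comm (exp (c * μ)), ← exp_add]
  congr 3 <;> ring_nf

/-- Non-asymptotic two-sided bound, of Mills-ratio type. The upper bound uses `e^{-t²/2} ≤ 1` and
`1 - e^{-μt} ≤ μt`; the lower bound uses the next terms of both expansions. -/
lemma gdpDelta_bounds {μ c : ℝ} (hμ : 0 < μ) (ha : 0 < c - μ / 2) :
    gaussianPDFReal 0 1 (c - μ / 2) * (μ / (c - μ / 2) ^ 2 *
      (1 - μ / (c - μ / 2) - 3 / (c - μ / 2) ^ 2)) ≤ gdpDelta μ (c * μ) ∧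
    gdpDelta μ (c * μ) ≤ gaussianPDFReal 0 1 (c - μ / 2) * (μ / (c - μ / 2) ^ 2) := by
  rw [gdpDelta_eq_integral hμ]
  set a := c - μ / 2
  have hφ := gaussianPDFReal_nonneg 0 1 a
  have i1 := (integrableOn_pow_mul_exp 1 ha).const_mul μ
  have i2 := (integrableOn_pow_mul_exp 2 ha).const_mul (μ ^ 2 / 2)
  have i3 := (integrableOn_pow_mul_exp 3 ha).const_mul (μ / 2)
  have hlow : ∀ t ∈ Set.Ioi (0 : ℝ),
      μ * (t ^ 1 * exp (-(a * t))) - μ ^ 2 / 2 * (t ^ 2 * exp (-(a * t)))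
        - μ / 2 * (t ^ 3 * exp (-(a * t)))
      ≤ exp (-(a * t)) * exp (-t ^ 2 / 2) * (1 - exp (-(μ * t))) := by
    intro t ht
    have hs : 0 ≤ μ * t := (mul_pos hμ ht).le
    have h1 := exp_neg_le_quadratic hs
    have h2 := add_one_le_exp (-t ^ 2 / 2)
    have h3 := add_one_le_exp (-(μ * t))
    have h4 : exp (-(μ * t)) ≤ 1 := exp_le_one_iff.2 (by linarith)
    have h5 : μ * t - (μ * t) ^ 2 / 2 - μ * t * (t ^ 2 / 2)
        ≤ exp (-t ^ 2 / 2) * (1 - exp (-(μ * t))) := by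
      nlinarith [mul_le_mul_of_nonneg_right h2 (sub_nonneg.2 h4),
        mul_nonneg (by linarith : 0 ≤ exp (-(μ * t)) - 1 + μ * t) (sq_nonneg t)]
    nlinarith [mul_le_mul_of_nonneg_left h5 (exp_pos (-(a * t))).le]
  have hup : ∀ t ∈ Set.Ioi (0 : ℝ), exp (-(a * t)) * exp (-t ^ 2 / 2) * (1 - exp (-(μ * t)))
      ≤ μ * (t ^ 1 * exp (-(a * t))) := by
    intro t ht
    have h3 := add_one_le_exp (-(μ * t))
    have h2 : exp (-t ^ 2 / 2) ≤ 1 := exp_le_one_iff.2 (by nlinarith [sq_nonneg t])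
    have hs : 0 ≤ μ * t := (mul_pos hμ ht).le
    calc _ = exp (-(a * t)) * (exp (-t ^ 2 / 2) * (1 - exp (-(μ * t)))) := by ring
      _ ≤ exp (-(a * t)) * (1 * (μ * t)) := by
        gcongr
        · exact sub_nonneg.2 (exp_le_one_iff.2 (by linarith))
        · linarith
      _ = _ := by ring
  have i0 : Integrable (fun t => exp (-(a * t)) * exp (-t ^ 2 / 2) * (1 - exp (-(μ * t))))
      (volume.restrict (Set.Ioi 0)) := by
    refine Integrable.mono' i1 (by fun_prop) ?_
    filter_upwards [ae_restrict_mem measurableSet_Ioi] with t ht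
    have hs : 0 ≤ μ * t := (mul_pos hμ ht).le
    rw [norm_of_nonneg]
    · exact hup t ht
    · exact mul_nonneg (by positivity) (sub_nonneg.2 (exp_le_one_iff.2 (by linarith)))
  constructor
  · gcongr
    refine le_trans (le_of_eq ?_) (setIntegral_mono_on ((i1.sub i2).sub i3) i0 measurableSet_Ioi hlow)
    have e1 := integral_sub (i1.sub i2) i3
    have e2 := integral_sub i1 i2
    simp only [Pi.sub_apply] at e1 ⊢
    rw [e1, e2]
    simp only [integral_const_mul, integral_pow_mul_exp _ ha]
    norm_num [Nat.factorial]
    field_simp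
    ring
  · gcongr
    refine le_trans (setIntegral_mono_on i0 i1 measurableSet_Ioi hup) (le_of_eq ?_)
    rw [integral_const_mul, integral_pow_mul_exp _ ha]
    norm_num [Nat.factorial]
    ring

lemma tendsto_sqrt_log : Tendsto (fun μ : ℝ => √(2 * log (1 / μ))) (𝓝[>] 0) atTop := by
  refine tendsto_sqrt_atTop.comp (Tendsto.const_mul_atTop two_pos ?_)
  simp only [one_div]
  exact tendsto_log_atTop.comp tendsto_inv_nhdsGT_zero

lemma tendsto_sqrt_log_mul : Tendsto (fun μ : ℝ => √(2 * log (1 / μ)) * μ) (𝓝[>] 0) (𝓝 0) := by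
  have h := ((tendsto_log_mul_rpow_nhdsGT_zero two_pos).const_mul (-2)).sqrt
  simp only [mul_zero, sqrt_zero] at h
  -- `√(2 log(1/μ)) μ` is the square root of `-2 μ² log μ`.
  refine h.congr' ?_
  filter_upwards [self_mem_nhdsWithin] with μ hμ
  have hμ : 0 < μ := hμ
  rw [rpow_two, show -2 * (log μ * μ ^ 2) = 2 * log (1 / μ) * μ ^ 2 by simp [log_inv]; ring,
    sqrt_mul' _ (sq_nonneg μ), sqrt_sq hμ.le]

/-- The choice `c² = 2 log(1/μ)` makes `exp(-c²/2) = μ`, so the density at `c - μ/2` is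
`μ / √(2π)` up to a factor tending to `1`. -/
lemma gaussianPDFReal_eq {μ c : ℝ} (hμ : 0 < μ) (hc : c ^ 2 = 2 * log (1 / μ)) :
    gaussianPDFReal 0 1 (c - μ / 2) = μ / √(2 * π) * exp (c * μ / 2 - μ ^ 2 / 8) := by
  have h : -(c - μ / 2 - 0) ^ 2 / (2 * 1) = log μ + (c * μ / 2 - μ ^ 2 / 8) := by
    rw [one_div, log_inv] at hc
    linear_combination -hc / 2
  rw [gaussianPDFReal, NNReal.coe_one, h, exp_add, exp_log hμ]
  ring_nf

/-- **Asymptotics of the GDP-to-DP conversion function.** With `c(μ) = √(2 log(1/μ))` and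
`ε(μ) = c(μ)·μ`, as `μ → 0⁺` one has
`δ_μ(ε(μ)) = μ² / (2√(2π) log(1/μ)) · (1 + o(1))`, i.e. the ratio
`δ_μ(ε(μ)) · 2√(2π) log(1/μ) / μ²` tends to `1`. -/
theorem gdpDelta_asymptotics :
    Tendsto
      (fun μ : ℝ =>
        gdpDelta μ (Real.sqrt (2 * Real.log (1 / μ)) * μ)
          * (2 * Real.sqrt (2 * Real.pi) * Real.log (1 / μ)) / μ ^ 2)
      (nhdsWithin 0 (Set.Ioi 0)) (nhds 1) := by
  set c : ℝ → ℝ := fun μ => √(2 * log (1 / μ))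
  have hc : Tendsto c (𝓝[>] 0) atTop := tendsto_sqrt_log
  have hμ0 : Tendsto (fun μ : ℝ => μ) (𝓝[>] 0) (𝓝 0) := tendsto_id.mono_left nhdsWithin_le_nhds
  have ha : Tendsto (fun μ => c μ - μ / 2) (𝓝[>] 0) atTop := by
    have := hc.atTop_add (hμ0.div_const 2).neg
    simpa only [← sub_eq_add_neg] using this
  have hE : Tendsto (fun μ => exp (c μ * μ / 2 - μ ^ 2 / 8)) (𝓝[>] 0) (𝓝 1) := by
    have hcμ : Tendsto (fun μ => c μ * μ) (𝓝[>] 0) (𝓝 0) := tendsto_sqrt_log_mul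
    have h := ((hcμ.div_const 2).sub ((hμ0.pow 2).div_const 8)).rexp
    simpa using h
  have hr : Tendsto (fun μ => c μ / (c μ - μ / 2)) (𝓝[>] 0) (𝓝 1) := by
    have h := ((hμ0.div_const 2).div_atTop ha).const_add 1
    rw [add_zero] at h
    refine h.congr' ?_
    filter_upwards [ha.eventually_gt_atTop 0] with μ h1
    rw [eq_div_iff h1.ne', add_mul, div_mul_cancel₀ _ h1.ne']
    ring
  -- `hU` and `hL` are the limits of the bounds of `gdpDelta_bounds` after normalisation.
  have hU := hE.mul (hr.pow 2)
  have hL := hU.mul (((hμ0.div_atTop ha).const_sub 1).sub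
    ((tendsto_const_nhds (x := (3 : ℝ))).div_atTop ((tendsto_pow_atTop two_ne_zero).comp ha)))
  simp only [one_pow, mul_one, sub_zero] at hU hL
  have key : ∀ᶠ μ in 𝓝[>] (0 : ℝ), 0 < μ ∧ 0 < c μ - μ / 2 ∧ 0 < c μ := by
    filter_upwards [self_mem_nhdsWithin, ha.eventually_gt_atTop 0, hc.eventually_gt_atTop 0]
      with μ h1 h2 h3 using ⟨h1, h2, h3⟩
  have hsq : ∀ μ, 0 < c μ → c μ ^ 2 = 2 * log (1 / μ) := fun μ h =>
    sq_sqrt (sqrt_pos.1 h).le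
  have hpi : 0 < √(2 * π) := by positivity
  refine tendsto_of_tendsto_of_tendsto_of_le_of_le' hL hU ?_ ?_
  · filter_upwards [key] with μ ⟨h1, h2, h3⟩
    have hb := (gdpDelta_bounds h1 h2).1
    rw [gaussianPDFReal_eq h1 (hsq μ h3)] at hb
    have hlog : 2 * √(2 * π) * log (1 / μ) = √(2 * π) * c μ ^ 2 := by rw [hsq μ h3]; ring
    rw [hlog, le_div_iff₀ (by positivity)]
    refine le_trans (le_of_eq ?_) (mul_le_mul_of_nonneg_right hb (by positivity))
    simp only [Function.comp_apply]
    field_simp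
  · filter_upwards [key] with μ ⟨h1, h2, h3⟩
    have hb := (gdpDelta_bounds h1 h2).2
    rw [gaussianPDFReal_eq h1 (hsq μ h3)] at hb
    have hlog : 2 * √(2 * π) * log (1 / μ) = √(2 * π) * c μ ^ 2 := by rw [hsq μ h3]; ring
    rw [hlog, div_le_iff₀ (by positivity)]
    refine (mul_le_mul_of_nonneg_right hb (by positivity)).trans (le_of_eq ?_)
    field_simp
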